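/- Let I = I_1 × ⋯ × I_n ⊂ ℝ^n be an axis-parallel box where each I_i = [a_i, a_i + l_i) is a half-open interval with integer length l_i ∈ ℤ, l_i ≥ 0. Let M be an n×n lower-triangular unipotent real matrix with inverse M^{-1} = (m'_{ij})_{i,j}. Then a point v = (v_1, …, v_n) ∈ ℤ^n lies in M·I if and only if for every i there exists δ_i ∈ {0, 1, …, l_i − 1} with v_i = ⌈a_i − Σ_{j<i} m'_{ij} v_j⌉ + δ_i. -/

import Mathlib

/-!
Since `M` is invertible, `v ∈ M·I` means `M⁻¹ v ∈ I`. The inverse is again lower-triangular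
unipotent, so the `i`-th coordinate of `M⁻¹ v` is `vᵢ + sᵢ` with `sᵢ = Σ_{j<i} m'ᵢⱼ vⱼ`. For
integers `vᵢ` and `lᵢ`, the condition `aᵢ ≤ vᵢ + sᵢ < aᵢ + lᵢ` says that `vᵢ` is one of the `lᵢ`
consecutive integers starting at `⌈aᵢ - sᵢ⌉`.
-/

lemma intCast_add_mem_Ico_iff {R : Type*} [Ring R] [LinearOrder R] [IsOrderedRing R]
    [FloorRing R] (a s : R) (l k : ℤ) :
    (k : R) + s ∈ Set.Ico a (a + l) ↔ k ∈ Set.Ico ⌈a - s⌉ (⌈a - s⌉ + l) := by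
  have lower : a ≤ k + s ↔ ⌈a - s⌉ ≤ k := by rw [Int.ceil_le, sub_le_iff_le_add]
  have upper : (k : R) + s < a + l ↔ k < ⌈a - s⌉ + l := by
    rw [← sub_lt_iff_lt_add (a := k), Int.lt_ceil, Int.cast_sub, sub_lt_sub_iff]
  rw [Set.mem_Ico, Set.mem_Ico, lower, upper]

lemma mem_Ico_add_iff_exists_eq_add {G : Type*} [AddCommGroup G] [PartialOrder G]
    [IsOrderedAddMonoid G] (c l x : G) :
    x ∈ Set.Ico c (c + l) ↔ ∃ δ, 0 ≤ δ ∧ δ < l ∧ x = c + δ := by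
  constructor
  · rintro ⟨hc, hl⟩
    exact ⟨x - c, sub_nonneg.2 hc, sub_lt_iff_lt_add'.2 hl, (add_sub_cancel c x).symm⟩
  · rintro ⟨δ, h_nonneg, h_lt, rfl⟩
    exact ⟨le_add_of_nonneg_right h_nonneg, by gcongr⟩

section Matrix

open Matrix

variable {ι R : Type*} [Fintype ι]

lemma mem_mulVec_image_iff [DecidableEq ι] [CommRing R] {M : Matrix ι ι R} (hM : IsUnit M.det)
    (s : Set (ι → R)) (w : ι → R) : w ∈ M.mulVec '' s ↔ M⁻¹ *ᵥ w ∈ s :=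
  Set.mem_image_iff_of_inverse
    (fun x => by rw [mulVec_mulVec, nonsing_inv_mul M hM, one_mulVec])
    (fun x => by rw [mulVec_mulVec, mul_nonsing_inv M hM, one_mulVec])

lemma mul_apply_self_of_isLowerTriangular [LinearOrder ι] [NonUnitalNonAssocSemiring R]
    {A B : Matrix ι ι R} (hA : A.IsLowerTriangular) (hB : B.IsLowerTriangular) (i : ι) :
    (A * B) i i = A i i * B i i := by
  rw [mul_apply]
  refine Fintype.sum_eq_single i fun j hj => ?_
  rcases hj.lt_or_gt with hji | hij
  · rw [hB hji, mul_zero]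
  · rw [hA hij, zero_mul]

end Matrix

/-- Lower-triangular unipotent matrices, the class to which both `M` and `M⁻¹` belong. The indices
may form any linear order; Mathlib's `IsLowerTriangular` asks for zeros at the `(i, j)` with
`i < j`. -/
structure IsLowerUnipotent {ι R : Type*} [LT ι] [Zero R] [One R] (M : Matrix ι ι R) : Prop where
  isLowerTriangular : M.IsLowerTriangular
  apply_self (i : ι) : M i i = 1

namespace IsLowerUnipotent

open Matrix

variable {ι R : Type*} [Fintype ι] [LinearOrder ι]

lemma mulVec_apply [NonAssocSemiring R] {M : Matrix ι ι R} (hM : IsLowerUnipotent M)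
    (w : ι → R) (i : ι) : (M *ᵥ w) i = w i + ∑ j with j < i, M i j * w j := by
  have above_diagonal : ∀ j ∉ insert i ({j | j < i} : Finset ι), M i j * w j = 0 := by
    intro j hj
    have hij : i < j := by simpa [← le_iff_eq_or_lt] using hj
    rw [hM.isLowerTriangular hij, zero_mul]
  calc (M *ᵥ w) i = ∑ j ∈ insert i ({j | j < i} : Finset ι), M i j * w j :=
        (Finset.sum_subset (Finset.subset_univ _) fun j _ => above_diagonal j).symm
    _ = M i i * w i + ∑ j with j < i, M i j * w j := Finset.sum_insert (by simp)
    _ = w i + ∑ j with j < i, M i j * w j := by rw [hM.apply_self, one_mul]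

variable [CommRing R] {M : Matrix ι ι R}

lemma isUnit_det (hM : IsLowerUnipotent M) : IsUnit M.det := by
  simp [det_of_isLowerTriangular M hM.isLowerTriangular, hM.apply_self]

lemma inv (hM : IsLowerUnipotent M) : IsLowerUnipotent M⁻¹ := by
  have : Invertible M := M.invertibleOfIsUnitDet hM.isUnit_det
  have inv_lower : M⁻¹.IsLowerTriangular :=
    blockTriangular_inv_of_blockTriangular hM.isLowerTriangular
  refine ⟨inv_lower, fun i => ?_⟩
  calc M⁻¹ i i = M⁻¹ i i * M i i := by rw [hM.apply_self, mul_one]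
    _ = (M⁻¹ * M) i i :=
        (mul_apply_self_of_isLowerTriangular inv_lower hM.isLowerTriangular i).symm
    _ = 1 := by rw [inv_mul_of_invertible, one_apply_eq]

end IsLowerUnipotent

theorem stmt2_general {ι R : Type*} [Fintype ι] [LinearOrder ι]
    [CommRing R] [LinearOrder R] [IsOrderedRing R] [FloorRing R]
    (a : ι → R) (l : ι → ℤ) {M : Matrix ι ι R} (hM : IsLowerUnipotent M) (v : ι → ℤ) :
    (fun i => (v i : R)) ∈ M.mulVec '' (Set.univ.pi fun i => Set.Ico (a i) (a i + (l i : R))) ↔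
      ∀ i, ∃ δ : ℤ, 0 ≤ δ ∧ δ < l i ∧
        v i = ⌈a i - ∑ j with j < i, M⁻¹ i j * (v j : R)⌉ + δ := by
  rw [mem_mulVec_image_iff hM.isUnit_det, Set.mem_univ_pi]
  refine forall_congr' fun i => ?_
  rw [hM.inv.mulVec_apply, intCast_add_mem_Ico_iff, mem_Ico_add_iff_exists_eq_add]

/-- Let `I = I₁ × ⋯ × Iₙ ⊂ ℝⁿ` be an axis-parallel box with
`Iᵢ = [aᵢ, aᵢ + lᵢ)`, `lᵢ ∈ ℤ`, `lᵢ ≥ 0`, and let `M` be lower-triangular unipotent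
with inverse `M⁻¹ = (m'ᵢⱼ)`. Then an integer point `v ∈ ℤⁿ` lies in `M·I` if and only if
for every `i` there exists `δᵢ ∈ {0, …, lᵢ − 1}` with
`vᵢ = ⌈aᵢ − Σ_{j<i} m'ᵢⱼ vⱼ⌉ + δᵢ`. -/
theorem stmt2 (n : ℕ) (a : Fin n → ℝ) (l : Fin n → ℤ) (hl : ∀ i, 0 ≤ l i)
    (M : Matrix (Fin n) (Fin n) ℝ)
    (htri : ∀ i j, i < j → M i j = 0) (hdiag : ∀ i, M i i = 1)
    (v : Fin n → ℤ) :
    (fun i => (v i : ℝ)) ∈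
        M.mulVec '' (Set.univ.pi fun i => Set.Ico (a i) (a i + (l i : ℝ))) ↔
      ∀ i, ∃ δ : ℤ, 0 ≤ δ ∧ δ < l i ∧
        v i = ⌈a i - ∑ j ∈ Finset.univ.filter (fun j => j < i), M⁻¹ i j * (v j : ℝ)⌉ + δ := by
  exact stmt2_general a l ⟨fun i j => htri i j, hdiag⟩ v
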